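/- Let K ⊂ ℝ³ be compact and δ > 0 be such that for every point (r₀, z) ∈ K one has η(q) = 1 for all q ∈ ℝ² with |q − r₀| ≤ 2δ. Then for every c₀ > 0 and every n ∈ ℕ there is a constant C = C(n, c₀, K, η) such that |Φ_k(r) − e^{ikz}| ≤ C (Re k)^{−n} for all r = (r₀, z) ∈ K and all k ∈ ℂ with Re k ≥ 1 and |Im k| ≤ c₀. -/

import Mathlib

open MeasureTheory Real Classical
open scoped RealInnerProductSpace

noncomputable section

abbrev E2 := EuclideanSpace ℝ (Fin 2)
abbrev E3 := EuclideanSpace ℝ (Fin 3)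

/-- The kernel `S_k(v) = sin(k|v|)/|v|`, with the removable singularity at `0` filled
in by the value `k`. -/
def Skern (k : ℂ) (v : E3) : ℂ :=
  if v = 0 then k else Complex.sin (k * ‖v‖) / (‖v‖ : ℂ)

/-- The embedding `q ↦ (q, 0)` of `ℝ²` into `ℝ³`. -/
def emb2 (q : E2) : E3 := (WithLp.equiv 2 (Fin 3 → ℝ)).symm ![q 0, q 1, 0]

/-- `p_k(r) = ∫_{ℝ²} η(q) S_k(r - (q,0)) dq`. -/
def pfun (η : E2 → ℝ) (k : ℂ) (r : E3) : ℂ :=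
  ∫ q : E2, (η q : ℂ) * Skern k (r - emb2 q)

/-- The projection of an `ℝ³` point onto its first two coordinates. -/
def proj32 (r : E3) : E2 := (WithLp.equiv 2 (Fin 2 → ℝ)).symm ![r 0, r 1]

/-- The partial derivative `∂p_k/∂z`, i.e. the derivative of `p_k` in the direction of the
third coordinate vector. -/
def pz (η : E2 → ℝ) (k : ℂ) (r : E3) : ℂ :=
  fderiv ℝ (pfun η k) r (EuclideanSpace.single 2 (1 : ℝ))

/-- `Φ_k(r) = (k/(2π)) p_k(r) - (i/(2π)) ∂p_k/∂z (r)`. -/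
def Phi (η : E2 → ℝ) (k : ℂ) (r : E3) : ℂ :=
  (k / (2 * π)) * pfun η k r - (Complex.I / (2 * π)) * pz η k r

/-!
In polar coordinates `(ρ, θ)` about `r₀` the distance from `r` to `(q, 0)` is `√(z² + ρ²)`. Since
`ρ f₁(√(z² + ρ²))` is the `ρ`-derivative of `f(√(z² + ρ²))` when `f'(s) = s f₁(s)`, one integration
by parts turns both `k p_k` (with `f = -cos (k s)`) and `∂p_k/∂z` (with `f = sin (k s) / s`) into a
boundary term at `ρ = 0` plus an integral against the radial derivative of `η`. The boundary terms
combine to `e^{ikz}`. In the remaining integrals the radial derivative of `η` vanishes near `ρ = 0`,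
the only stationary point of the phase `√(z² + ρ²)`, so repeated integration by parts gives decay of
every order in `k`, uniformly for bounded `r` and bounded `Im k`.
-/

open Filter Set
open scoped ContDiff Topology

section RadialFunctions

variable {H F : Type*} [NormedAddCommGroup H] [InnerProductSpace ℝ H]
  [NormedAddCommGroup F] [NormedSpace ℝ F]

lemma exists_hasDerivAt_mul_of_even {f : ℂ → ℂ} (hf : Differentiable ℂ f) (heven : f.Even) :
    ∃ f₁ : ℂ → ℂ, Continuous f₁ ∧ ∀ s, HasDerivAt f (s * f₁ s) s := by
  have deriv_zero : deriv f 0 = 0 := by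
    have h := deriv_comp_neg f 0
    rw [funext heven, neg_zero] at h
    exact self_eq_neg.mp h
  refine ⟨dslope (deriv f) 0, ?_, fun s => ?_⟩
  · have h : DifferentiableOn ℂ (dslope (deriv f) 0) univ :=
      (Complex.differentiableOn_dslope univ_mem).mpr hf.deriv.differentiableOn
    exact (differentiableOn_univ.mp h).continuous
  · have h := sub_smul_dslope_of_zero deriv_zero s
    rw [sub_zero, smul_eq_mul] at h
    exact h ▸ (hf s).hasDerivAt

lemma hasFDerivAt_norm {v : H} (hv : v ≠ 0) :
    HasFDerivAt (fun v : H => ‖v‖) (‖v‖⁻¹ • innerSL ℝ v) v := by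
  have h := (hasStrictFDerivAt_norm_sq v).hasFDerivAt.sqrt (by simpa using hv)
  simp only [Real.sqrt_sq (norm_nonneg _)] at h
  refine h.congr_fderiv ?_
  rw [two_nsmul, ← two_smul ℝ, smul_smul]
  congr 1
  field_simp

lemma hasFDerivAt_comp_norm {f f₁ : ℝ → F} (hf : ∀ s, HasDerivAt f (s • f₁ s) s) (v : H) :
    HasFDerivAt (fun v : H => f ‖v‖) ((innerSL ℝ v).smulRight (f₁ ‖v‖)) v := by
  rcases eq_or_ne v 0 with rfl | hv
  · have h := hasDerivAt_iff_isLittleO_nhds_zero.mp (hf 0)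
    rw [hasFDerivAt_iff_isLittleO_nhds_zero]
    simpa [Function.comp_def] using (h.comp_tendsto (tendsto_norm_zero (E := H))).of_norm_right
  · refine ((hf ‖v‖).hasFDerivAt.comp v (hasFDerivAt_norm hv)).congr_fderiv ?_
    ext u
    have : ‖v‖ ≠ 0 := norm_ne_zero_iff.mpr hv
    simp only [ContinuousLinearMap.comp_apply, _root_.smul_apply,
      ContinuousLinearMap.toSpanSingleton_apply, ContinuousLinearMap.smulRight_apply, smul_smul,
      smul_eq_mul]
    congr 1
    field_simp

-- `√(z² + ρ²)` is the norm of `z + ρ i`, so no case distinction is needed where it vanishes.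
lemma hasDerivAt_comp_sqrt_sq_add_sq {f f₁ : ℝ → F} (hf : ∀ s, HasDerivAt f (s • f₁ s) s)
    (z ρ : ℝ) :
    HasDerivAt (fun t => f √(z ^ 2 + t ^ 2)) (ρ • f₁ √(z ^ 2 + ρ ^ 2)) ρ := by
  have hline : HasDerivAt (fun t : ℝ => (z + t * Complex.I : ℂ)) Complex.I ρ := by
    simpa using ((hasDerivAt_id ρ).ofReal_comp.mul_const Complex.I).const_add (z : ℂ)
  have h := (hasFDerivAt_comp_norm hf (z + ρ * Complex.I : ℂ)).comp_hasDerivAt ρ hline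
  have hinner : inner ℝ (z + ρ * Complex.I : ℂ) Complex.I = ρ := by
    simp [Complex.inner]
  simpa only [Function.comp_def, Complex.norm_add_mul_I, ContinuousLinearMap.smulRight_apply,
    innerSL_apply_apply, hinner] using h

end RadialFunctions

section ParametricIntegrals

variable {H X F : Type*} [NormedAddCommGroup H] [NormedSpace ℝ H] [LocallyCompactSpace H]
  [TopologicalSpace X] [T2Space X] [MeasurableSpace X] [OpensMeasurableSpace X]
  [NormedAddCommGroup F] [NormedSpace ℝ F]

lemma hasFDerivAt_integral_of_eq_zero_of_notMem {μ : Measure X} [IsFiniteMeasureOnCompacts μ]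
    {f : H → X → F} {f' : H → X → H →L[ℝ] F} {T : Set X} (hT : IsCompact T)
    (hf : Continuous f.uncurry) (hf' : Continuous f'.uncurry)
    (hderiv : ∀ x q, HasFDerivAt (fun x => f x q) (f' x q) x)
    (hzero : ∀ x, ∀ q ∉ T, f x q = 0) (x₀ : H) :
    HasFDerivAt (fun x => ∫ q, f x q ∂μ) (∫ q, f' x₀ q ∂μ) x₀ := by
  obtain ⟨N, hN, hx₀⟩ := exists_compact_mem_nhds x₀
  obtain ⟨M, hM⟩ := (hN.prod hT).exists_bound_of_continuousOn hf'.continuousOn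
  have hzero' : ∀ x, ∀ q ∉ T, f' x q = 0 := fun x q hq =>
    (hderiv x q).unique ((hasFDerivAt_const 0 x).congr_of_eventuallyEq
      (Eventually.of_forall fun y => hzero y q hq))
  have hint : ∀ x, Integrable (f x) μ := fun x =>
    (hf.uncurry_left x).integrable_of_hasCompactSupport (.intro hT (hzero x))
  have hint' : Integrable (f' x₀) μ :=
    (hf'.uncurry_left x₀).integrable_of_hasCompactSupport (.intro hT (hzero' x₀))
  refine hasFDerivAt_integral_of_dominated_of_fderiv_le (bound := T.indicator fun _ => M) hx₀
    (Eventually.of_forall fun x => (hint x).aestronglyMeasurable) (hint x₀)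
    hint'.aestronglyMeasurable (Eventually.of_forall fun q x hx => ?_)
    ((integrable_indicator_iff hT.measurableSet).mpr (integrableOn_const hT.measure_lt_top.ne))
    (Eventually.of_forall fun q x _ => hderiv x q)
  by_cases hq : q ∈ T
  · simpa [hq] using hM (x, q) ⟨hx, hq⟩
  · simp [hq, hzero' x q hq]

end ParametricIntegrals

section CompactSupport

lemma exists_forall_eq_zero_of_le_norm_sub {V F : Type*} [SeminormedAddCommGroup V] [Zero F]
    {f : V → F} (hf : HasCompactSupport f) {S : Set V} (hS : Bornology.IsBounded S) :
    ∃ R > 0, ∀ c ∈ S, ∀ q, R ≤ ‖q - c‖ → f q = 0 := by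
  obtain ⟨A, hA, hf_le⟩ := hf.isCompact.isBounded.exists_pos_norm_lt
  obtain ⟨B, hB, hS_le⟩ := hS.exists_pos_norm_lt
  refine ⟨A + B, add_pos hA hB, fun c hc q hq => by_contra fun hfq => ?_⟩
  linarith [norm_sub_le q c, hf_le q (subset_tsupport f hfq), hS_le c hc]

end CompactSupport

section NonstationaryPhase

variable {E F : Type*}

/-- The amplitude produced by one integration by parts in `∫ a e^{wφ} dt`: dividing by the
derivative of the phase and differentiating, `a ↦ (a / φ')'`, in the last variable. -/
def phaseTransport (φ : E → ℝ → ℝ) (a : E → ℝ → ℂ) (x : E) : ℝ → ℂ :=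
  deriv fun t => a x t / ((deriv (φ x) t : ℝ) : ℂ)

lemma phaseTransport_eventuallyEq_zero {φ : E → ℝ → ℝ} {a : E → ℝ → ℂ} {x : E} {t : ℝ}
    (ha : a x =ᶠ[𝓝 t] 0) :
    phaseTransport φ a x =ᶠ[𝓝 t] 0 := by
  have hdiv : (fun t => a x t / ((deriv (φ x) t : ℝ) : ℂ)) =ᶠ[𝓝 t] fun _ => 0 :=
    ha.mono fun s hs => by simp [hs]
  exact hdiv.deriv.trans (.of_eq (deriv_const' 0))

variable [NormedAddCommGroup E] [NormedSpace ℝ E] [NormedAddCommGroup F] [NormedSpace ℝ F]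

lemma hasDerivAt_slice_of_contDiffOn {f : E → ℝ → F} {U : Set (E × ℝ)} (hU : IsOpen U)
    (hf : ContDiffOn ℝ ∞ f.uncurry U) {x : E} {t : ℝ} (hx : (x, t) ∈ U) :
    HasDerivAt (f x) (fderiv ℝ f.uncurry (x, t) (0, 1)) t := by
  have hline : HasDerivAt (fun s : ℝ => (x, s)) (0, 1) t :=
    (hasDerivAt_const t x).prodMk (hasDerivAt_id t)
  exact ((hf.contDiffAt (hU.mem_nhds hx)).differentiableAt (by simp)).hasFDerivAt.comp_hasDerivAt
    t hline

lemma contDiffOn_uncurry_deriv {f : E → ℝ → F} {U : Set (E × ℝ)} (hU : IsOpen U)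
    (hf : ContDiffOn ℝ ∞ f.uncurry U) :
    ContDiffOn ℝ ∞ (Function.uncurry fun x => deriv (f x)) U :=
  ((hf.fderiv_of_isOpen hU (by simp)).clm_apply contDiffOn_const).congr
    fun _ hx => (hasDerivAt_slice_of_contDiffOn hU hf hx).deriv

lemma mul_integral_mul_cexp_eq_neg {φ φ' : ℝ → ℝ} {b b' : ℝ → ℂ} {α β : ℝ}
    (hφ : ∀ t ∈ uIcc α β, HasDerivAt φ (φ' t) t) (hφ' : ContinuousOn φ' (uIcc α β))
    (hb : ∀ t ∈ uIcc α β, HasDerivAt b (b' t) t) (hb' : ContinuousOn b' (uIcc α β))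
    (hα : b α = 0) (hβ : b β = 0) (w : ℂ) :
    w * ∫ t in α..β, b t * φ' t * Complex.exp (w * φ t) =
      -∫ t in α..β, b' t * Complex.exp (w * φ t) := by
  have hexp : ∀ t ∈ uIcc α β, HasDerivAt (fun t => Complex.exp (w * φ t))
      (Complex.exp (w * φ t) * (w * φ' t)) t := fun t ht =>
    ((hφ t ht).ofReal_comp.const_mul w).cexp
  have hφc : ContinuousOn φ (uIcc α β) := fun t ht => (hφ t ht).continuousAt.continuousWithinAt
  have parts := intervalIntegral.integral_mul_deriv_eq_deriv_mul hb hexp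
    hb'.intervalIntegrable (ContinuousOn.intervalIntegrable (by fun_prop))
  rw [hα, hβ, zero_mul, zero_mul, sub_zero, zero_sub] at parts
  rw [← parts, ← intervalIntegral.integral_const_mul]
  congr 1 with t
  ring

variable {U : Set (E × ℝ)} {K : Set E} {φ : E → ℝ → ℝ} {α β : ℝ}

lemma contDiffOn_div_deriv (hU : IsOpen U) (hφ : ContDiffOn ℝ ∞ φ.uncurry U)
    (hφ' : ∀ x t, (x, t) ∈ U → deriv (φ x) t ≠ 0) {a : E → ℝ → ℂ}
    (ha : ContDiffOn ℝ ∞ a.uncurry U) :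
    ContDiffOn ℝ ∞ (Function.uncurry fun x t => a x t / ((deriv (φ x) t : ℝ) : ℂ)) U :=
  (ha.mul ((Complex.ofRealCLM.contDiff.comp_contDiffOn (contDiffOn_uncurry_deriv hU hφ)).inv
    fun p hp => Complex.ofReal_ne_zero.mpr (hφ' p.1 p.2 hp))).congr
    fun _ _ => div_eq_mul_inv _ _

lemma mul_integral_mul_cexp_eq_neg_phaseTransport (hU : IsOpen U)
    (hφ : ContDiffOn ℝ ∞ φ.uncurry U) (hφ' : ∀ x t, (x, t) ∈ U → deriv (φ x) t ≠ 0)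
    {a : E → ℝ → ℂ} (ha : ContDiffOn ℝ ∞ a.uncurry U) {x : E} (hx : ∀ t ∈ uIcc α β, (x, t) ∈ U)
    (hα : a x α = 0) (hβ : a x β = 0) (w : ℂ) :
    w * ∫ t in α..β, a x t * Complex.exp (w * φ x t) =
      -∫ t in α..β, phaseTransport φ a x t * Complex.exp (w * φ x t) := by
  have hb := contDiffOn_div_deriv hU hφ hφ' ha
  have hslice : ContinuousOn (fun t => (x, t)) (uIcc α β) := by fun_prop
  rw [← mul_integral_mul_cexp_eq_neg (φ := φ x) (φ' := deriv (φ x))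
    (b := fun t => a x t / ((deriv (φ x) t : ℝ) : ℂ)) (b' := phaseTransport φ a x)
    (fun t ht => (hasDerivAt_slice_of_contDiffOn hU hφ (hx t ht)).differentiableAt.hasDerivAt)
    ((contDiffOn_uncurry_deriv hU hφ).continuousOn.comp hslice hx)
    (fun t ht => (hasDerivAt_slice_of_contDiffOn hU hb (hx t ht)).differentiableAt.hasDerivAt)
    ((contDiffOn_uncurry_deriv hU hb).continuousOn.comp hslice hx) (by simp [hα]) (by simp [hβ])]
  congr 1
  refine intervalIntegral.integral_congr fun t ht => ?_
  have : ((deriv (φ x) t : ℝ) : ℂ) ≠ 0 := Complex.ofReal_ne_zero.mpr (hφ' x t (hx t ht))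
  simp only [div_mul_cancel₀ _ this]

lemma norm_cexp_mul_ofReal_le {w : ℂ} {c s M : ℝ} (hw : |w.re| ≤ c) (hs : |s| ≤ M) :
    ‖Complex.exp (w * s)‖ ≤ Real.exp (c * M) := by
  rw [Complex.norm_exp, Complex.re_mul_ofReal, Real.exp_le_exp]
  calc w.re * s ≤ |w.re| * |s| := (le_abs_self _).trans_eq (abs_mul _ _)
    _ ≤ c * M := mul_le_mul hw hs (abs_nonneg _) ((abs_nonneg _).trans hw)

theorem exists_norm_pow_mul_norm_integral_mul_cexp_le (hU : IsOpen U)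
    (hφ : ContDiffOn ℝ ∞ φ.uncurry U) (hφ' : ∀ x t, (x, t) ∈ U → deriv (φ x) t ≠ 0)
    (hK : IsCompact K) (hKU : K ×ˢ uIcc α β ⊆ U) (c : ℝ) (n : ℕ) {a : E → ℝ → ℂ}
    (ha : ContDiffOn ℝ ∞ a.uncurry U) :
    ∃ C, ∀ x ∈ K, a x =ᶠ[𝓝 α] 0 → a x =ᶠ[𝓝 β] 0 → ∀ w : ℂ, |w.re| ≤ c →
      ‖w‖ ^ n * ‖∫ t in α..β, a x t * Complex.exp (w * φ x t)‖ ≤ C := by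
  induction n generalizing a with
  | zero =>
    have hKI : IsCompact (K ×ˢ uIcc α β) := hK.prod isCompact_uIcc
    obtain ⟨A, hA⟩ := hKI.exists_bound_of_continuousOn (ha.continuousOn.mono hKU)
    obtain ⟨M, hM⟩ := hKI.exists_bound_of_continuousOn (hφ.continuousOn.mono hKU)
    refine ⟨A * Real.exp (c * M) * |β - α|, fun x hx _ _ w hw => ?_⟩
    rw [pow_zero, one_mul]
    refine intervalIntegral.norm_integral_le_of_norm_le_const fun t ht => ?_
    have hxt : (x, t) ∈ K ×ˢ uIcc α β := ⟨hx, uIoc_subset_uIcc ht⟩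
    rw [norm_mul]
    exact mul_le_mul (hA _ hxt) (norm_cexp_mul_ofReal_le hw (hM _ hxt)) (norm_nonneg _)
      ((norm_nonneg _).trans (hA _ hxt))
  | succ n ih =>
    obtain ⟨C, hC⟩ := ih (contDiffOn_uncurry_deriv hU (contDiffOn_div_deriv hU hφ hφ' ha))
    refine ⟨C, fun x hx hα hβ w hw => ?_⟩
    rw [pow_succ, mul_assoc, ← norm_mul, mul_integral_mul_cexp_eq_neg_phaseTransport hU hφ hφ' ha
      (fun t ht => hKU ⟨hx, ht⟩) hα.self_of_nhds hβ.self_of_nhds w, norm_neg]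
    exact hC x hx (phaseTransport_eventuallyEq_zero hα) (phaseTransport_eventuallyEq_zero hβ) w hw

end NonstationaryPhase

section PolarCoordinates

/-- The unit vector of `ℝ²` in direction `θ`, so that `ρ • unitVec θ` has polar coordinates
`(ρ, θ)`. -/
def unitVec (θ : ℝ) : E2 := !₂[Real.cos θ, Real.sin θ]

lemma norm_unitVec (θ : ℝ) : ‖unitVec θ‖ = 1 := by
  simp [unitVec, EuclideanSpace.norm_eq, Fin.sum_univ_two]

lemma contDiff_unitVec : ContDiff ℝ ∞ unitVec := by
  refine contDiff_euclidean.mpr fun i => ?_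
  fin_cases i
  · exact Real.contDiff_cos
  · exact Real.contDiff_sin

lemma norm_add_smul_unitVec_sub (c : E2) (ρ θ : ℝ) : ‖c + ρ • unitVec θ - c‖ = |ρ| := by
  rw [add_sub_cancel_left, norm_smul, norm_unitVec, mul_one, Real.norm_eq_abs]

variable {F : Type*} [NormedAddCommGroup F] [NormedSpace ℝ F]

lemma integral_eq_setIntegral_polar (f : E2 → F) (c : E2) :
    ∫ q, f q = ∫ p in Ioi (0 : ℝ) ×ˢ Ioo (-π) π, p.1 • f (c + p.1 • unitVec p.2) := by
  have translate : ∫ q, f q = ∫ q, f (c + q) := (integral_add_left_eq_self f c).symm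
  have toPi := (PiLp.volume_preserving_toLp (Fin 2)).integral_comp
    (MeasurableEquiv.toLp 2 (Fin 2 → ℝ)).measurableEmbedding (fun q => f (c + q))
  have toProd := (volume_preserving_finTwoArrow ℝ).symm.integral_comp
    (MeasurableEquiv.measurableEmbedding _) (fun q => f (c + WithLp.toLp 2 q))
  rw [translate, ← toPi, ← toProd, ← integral_comp_polarCoord_symm, polarCoord_target]
  congr 1 with p
  congr 3
  ext i
  fin_cases i <;> simp [polarCoord, unitVec, MeasurableEquiv.finTwoArrow]

lemma integral_eq_intervalIntegral_polar {f : E2 → F} (hf : Continuous f) {c : E2} {R : ℝ}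
    (hR : 0 ≤ R) (hzero : ∀ q, R ≤ ‖q - c‖ → f q = 0) :
    ∫ q, f q = ∫ θ in -π..π, ∫ ρ in 0..R, ρ • f (c + ρ • unitVec θ) := by
  have hvec := contDiff_unitVec.continuous
  have truncate : ∫ p in Ioo (-π) π ×ˢ Ioi (0 : ℝ), p.2 • f (c + p.2 • unitVec p.1) =
      ∫ p in Ioo (-π) π ×ˢ Ioc (0 : ℝ) R, p.2 • f (c + p.2 • unitVec p.1) := by
    refine setIntegral_eq_of_subset_of_forall_sdiff_eq_zero
      (measurableSet_Ioo.prod measurableSet_Ioi) (Set.prod_mono le_rfl Ioc_subset_Ioi_self) ?_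
    rintro ⟨θ, ρ⟩ ⟨⟨hθ, hρ⟩, hout⟩
    have : R ≤ ‖c + ρ • unitVec θ - c‖ := by
      rw [norm_add_smul_unitVec_sub]
      exact (lt_of_not_ge fun h => hout ⟨hθ, hρ, h⟩).le.trans (le_abs_self ρ)
    simp only [hzero _ this, smul_zero]
  have hint : IntegrableOn (fun p : ℝ × ℝ => p.2 • f (c + p.2 • unitVec p.1))
      (Ioo (-π) π ×ˢ Ioc 0 R) :=
    (Continuous.integrableOn_Icc (by fun_prop)).mono_set <|
      (Set.prod_mono Ioo_subset_Icc_self Ioc_subset_Icc_self).trans (Icc_prod_Icc _ _ _ _).subset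
  have swap := setIntegral_prod_swap (μ := (volume : Measure ℝ)) (ν := (volume : Measure ℝ))
    (Ioo (-π) π) (Ioi 0) fun p => p.2 • f (c + p.2 • unitVec p.1)
  rw [integral_eq_setIntegral_polar f c]
  simp only [Measure.volume_eq_prod] at truncate hint ⊢
  simp only [Prod.fst_swap, Prod.snd_swap] at swap
  rw [swap, truncate, setIntegral_prod _ hint, ← integral_Ioc_eq_integral_Ioo,
    ← intervalIntegral.integral_of_le (by linarith [pi_pos])]
  simp only [intervalIntegral.integral_of_le hR]

end PolarCoordinates

section RadialIntegrals

lemma contDiff_proj32 : ContDiff ℝ ∞ proj32 := by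
  refine contDiff_euclidean.mpr fun i => ?_
  fin_cases i
  · exact (by fun_prop : ContDiff ℝ ∞ fun r : E3 => r 0)
  · exact (by fun_prop : ContDiff ℝ ∞ fun r : E3 => r 1)

lemma continuous_emb2 : Continuous emb2 := by
  refine (PiLp.continuous_toLp 2 _).comp (continuous_pi fun i => ?_)
  fin_cases i
  · exact (by fun_prop : Continuous fun q : E2 => q 0)
  · exact (by fun_prop : Continuous fun q : E2 => q 1)
  · exact continuous_const

lemma norm_sub_emb2_polar (r : E3) (ρ θ : ℝ) :
    ‖r - emb2 (proj32 r + ρ • unitVec θ)‖ = √(r 2 ^ 2 + ρ ^ 2) := by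
  simp only [EuclideanSpace.norm_eq, Fin.sum_univ_three, emb2, proj32, unitVec]
  congr 1
  simp [mul_pow]
  linear_combination ρ ^ 2 * Real.sin_sq_add_cos_sq θ

lemma inner_sub_emb2_single (r : E3) (q : E2) :
    inner ℝ (r - emb2 q) (EuclideanSpace.single 2 (1 : ℝ)) = r 2 := by
  rw [EuclideanSpace.inner_single_right]
  simp [emb2]

/-- The radial derivative of `η` in polar coordinates `(ρ, θ)` about the projection of `r`;
`x = (r, θ)`. -/
def radialDeriv (η : E2 → ℝ) (x : E3 × ℝ) : ℝ → ℝ :=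
  deriv fun t => η (proj32 x.1 + t • unitVec x.2)

variable {η : E2 → ℝ}

lemma contDiff_comp_polar (hη : ContDiff ℝ ∞ η) :
    ContDiff ℝ ∞ (Function.uncurry fun (x : E3 × ℝ) (t : ℝ) =>
      η (proj32 x.1 + t • unitVec x.2)) := by
  have := contDiff_proj32
  have := contDiff_unitVec
  unfold Function.uncurry
  fun_prop

lemma contDiff_radialDeriv (hη : ContDiff ℝ ∞ η) : ContDiff ℝ ∞ (radialDeriv η).uncurry :=
  contDiffOn_univ.mp <| contDiffOn_uncurry_deriv isOpen_univ (contDiff_comp_polar hη).contDiffOn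

lemma hasDerivAt_radialDeriv (hη : ContDiff ℝ ∞ η) (x : E3 × ℝ) (ρ : ℝ) :
    HasDerivAt (fun t => η (proj32 x.1 + t • unitVec x.2)) (radialDeriv η x ρ) ρ :=
  (hasDerivAt_slice_of_contDiffOn isOpen_univ (contDiff_comp_polar hη).contDiffOn
    (mem_univ _)).differentiableAt.hasDerivAt

lemma continuous_integral_radialDeriv_mul (hη : ContDiff ℝ ∞ η) (r : E3) (R : ℝ) {g : ℝ → ℂ}
    (hg : Continuous g) : Continuous fun θ => ∫ ρ in 0..R, (radialDeriv η (r, θ) ρ : ℂ) * g ρ := by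
  refine intervalIntegral.continuous_parametric_intervalIntegral_of_continuous' ?_ _ _
  have : Continuous fun p : ℝ × ℝ => radialDeriv η (r, p.1) p.2 :=
    (contDiff_radialDeriv hη).continuous.comp
      (by fun_prop : Continuous fun p : ℝ × ℝ => ((r, p.1), p.2))
  unfold Function.uncurry
  fun_prop

lemma integral_radialDeriv_mul_add (hη : ContDiff ℝ ∞ η) (r : E3) (R : ℝ) {g₁ g₂ : ℝ → ℂ}
    (hg₁ : Continuous g₁) (hg₂ : Continuous g₂) :
    ∫ θ in -π..π, ∫ ρ in 0..R, (radialDeriv η (r, θ) ρ : ℂ) * (g₁ ρ + g₂ ρ) =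
      (∫ θ in -π..π, ∫ ρ in 0..R, (radialDeriv η (r, θ) ρ : ℂ) * g₁ ρ) +
        ∫ θ in -π..π, ∫ ρ in 0..R, (radialDeriv η (r, θ) ρ : ℂ) * g₂ ρ := by
  rw [← intervalIntegral.integral_add
    ((continuous_integral_radialDeriv_mul hη r R hg₁).intervalIntegrable _ _)
    ((continuous_integral_radialDeriv_mul hη r R hg₂).intervalIntegrable _ _)]
  congr 1 with θ
  have := (contDiff_radialDeriv hη).continuous.uncurry_left (r, θ)
  rw [← intervalIntegral.integral_add (Continuous.intervalIntegrable (by fun_prop) _ _)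
    (Continuous.intervalIntegrable (by fun_prop) _ _)]
  simp only [mul_add]

lemma integral_ray_smul_mul_comp_norm (hη : ContDiff ℝ ∞ η) {f f₁ : ℝ → ℂ}
    (hf : ∀ s, HasDerivAt f (s • f₁ s) s) (hf₁ : Continuous f₁) (r : E3) (θ : ℝ) {R : ℝ}
    (hend : η (proj32 r + R • unitVec θ) = 0) :
    ∫ ρ in 0..R, ρ • ((η (proj32 r + ρ • unitVec θ) : ℂ) *
        f₁ ‖r - emb2 (proj32 r + ρ • unitVec θ)‖) =
      -(η (proj32 r) * f |r 2|) -
        ∫ ρ in 0..R, (radialDeriv η (r, θ) ρ : ℂ) * f √(r 2 ^ 2 + ρ ^ 2) := by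
  have hslice : Continuous (radialDeriv η (r, θ)) :=
    (contDiff_radialDeriv hη).continuous.uncurry_left (r, θ)
  have parts := intervalIntegral.integral_mul_deriv_eq_deriv_mul (a := 0) (b := R)
    (fun ρ _ => (hasDerivAt_radialDeriv hη (r, θ) ρ).ofReal_comp)
    (fun ρ _ => hasDerivAt_comp_sqrt_sq_add_sq hf (r 2) ρ)
    (Continuous.intervalIntegrable (by fun_prop) _ _)
    (Continuous.intervalIntegrable (by fun_prop) _ _)
  simp only [hend, Complex.ofReal_zero, zero_mul, zero_smul, add_zero, zero_sub, ne_eq,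
    OfNat.ofNat_ne_zero, not_false_eq_true, zero_pow, Real.sqrt_sq_eq_abs] at parts
  simp only [norm_sub_emb2_polar, ← parts, mul_smul_comm]

lemma integral_mul_comp_norm_sub_emb2 (hη : ContDiff ℝ ∞ η) {f f₁ : ℝ → ℂ}
    (hf : ∀ s, HasDerivAt f (s • f₁ s) s) (hf₁ : Continuous f₁) {r : E3} {R : ℝ} (hR : 0 ≤ R)
    (hzero : ∀ q, R ≤ ‖q - proj32 r‖ → η q = 0) :
    ∫ q, (η q : ℂ) * f₁ ‖r - emb2 q‖ = -(2 * π * η (proj32 r) * f |r 2|) -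
      ∫ θ in -π..π, ∫ ρ in 0..R, (radialDeriv η (r, θ) ρ : ℂ) * f √(r 2 ^ 2 + ρ ^ 2) := by
  have hηc := hη.continuous
  have hemb := continuous_emb2
  have hfc : Continuous f := continuous_iff_continuousAt.mpr fun s => (hf s).continuousAt
  have hend (θ : ℝ) : η (proj32 r + R • unitVec θ) = 0 :=
    hzero _ ((norm_add_smul_unitVec_sub _ _ _).symm ▸ le_abs_self R)
  rw [integral_eq_intervalIntegral_polar (by fun_prop) hR fun q hq => by
    rw [hzero q hq, Complex.ofReal_zero, zero_mul]]
  simp only [integral_ray_smul_mul_comp_norm hη hf hf₁ r _ (hend _)]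
  rw [intervalIntegral.integral_sub (by simp)
    ((continuous_integral_radialDeriv_mul hη r R (by fun_prop)).intervalIntegrable _ _),
    intervalIntegral.integral_const, Complex.real_smul]
  push_cast
  ring

end RadialIntegrals

section PlaneWave

/-- The entire function `s ↦ sin (k s) / s`, whose restriction to `s = ‖v‖` is `Skern k v`. -/
def kernelProfile (k s : ℂ) : ℂ := k * dslope Complex.sin 0 (k * s)

lemma mul_kernelProfile (k s : ℂ) : s * kernelProfile k s = Complex.sin (k * s) := by
  have h := sub_smul_dslope_of_zero Complex.sin_zero (k * s)
  rw [sub_zero, smul_eq_mul] at h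
  rw [← h, kernelProfile]
  ring

lemma kernelProfile_of_ne_zero (k : ℂ) {s : ℂ} (hs : s ≠ 0) :
    kernelProfile k s = Complex.sin (k * s) / s := by
  rw [← mul_kernelProfile, mul_div_cancel_left₀ _ hs]

lemma Skern_eq_kernelProfile (k : ℂ) (v : E3) : Skern k v = kernelProfile k ‖v‖ := by
  rcases eq_or_ne v 0 with rfl | hv
  · simp [Skern, kernelProfile]
  · rw [Skern, if_neg hv, kernelProfile_of_ne_zero k (by simpa using hv)]

lemma differentiable_kernelProfile (k : ℂ) : Differentiable ℂ (kernelProfile k) := by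
  have h : Differentiable ℂ (dslope Complex.sin 0) := differentiableOn_univ.mp <|
    (Complex.differentiableOn_dslope univ_mem).mpr Complex.differentiable_sin.differentiableOn
  unfold kernelProfile
  fun_prop

lemma kernelProfile_even (k : ℂ) : (kernelProfile k).Even := by
  intro s
  rcases eq_or_ne s 0 with rfl | hs
  · rw [neg_zero]
  · rw [kernelProfile_of_ne_zero k hs, kernelProfile_of_ne_zero k (neg_ne_zero.mpr hs), mul_neg,
      Complex.sin_neg, neg_div_neg_eq]

lemma mul_kernelProfile_abs (k : ℂ) (z : ℝ) :
    z * kernelProfile k (|z| : ℝ) = Complex.sin (k * z) := by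
  rcases abs_choice z with h | h
  · rw [h, mul_kernelProfile]
  · rw [h, Complex.ofReal_neg, kernelProfile_even, mul_kernelProfile]

variable {η : E2 → ℝ} {r : E3} {R : ℝ}

lemma mul_pfun_eq (hη : ContDiff ℝ ∞ η) (hR : 0 ≤ R)
    (hzero : ∀ q, R ≤ ‖q - proj32 r‖ → η q = 0) (k : ℂ) :
    k * pfun η k r = 2 * π * η (proj32 r) * Complex.cos (k * r 2) +
      ∫ θ in -π..π, ∫ ρ in 0..R,
        (radialDeriv η (r, θ) ρ : ℂ) * Complex.cos (k * √(r 2 ^ 2 + ρ ^ 2)) := by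
  have hcos (s : ℝ) : HasDerivAt (fun s : ℝ => -Complex.cos (k * s))
      (s • (k * kernelProfile k s)) s := by
    have h := (((hasDerivAt_id (s : ℂ)).const_mul k).ccos.neg).comp_ofReal
    refine h.congr_deriv ?_
    rw [id, ← mul_kernelProfile, Complex.real_smul]
    ring
  have hcont : Continuous fun s : ℝ => k * kernelProfile k s :=
    ((differentiable_kernelProfile k).continuous.comp Complex.continuous_ofReal).const_mul k
  have cos_abs : Complex.cos (k * (|r 2| : ℝ)) = Complex.cos (k * r 2) := by
    rcases abs_choice (r 2) with h | h <;> simp [h]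
  have h := integral_mul_comp_norm_sub_emb2 hη hcos hcont hR hzero
  simp only [mul_left_comm _ k, integral_const_mul, mul_neg, intervalIntegral.integral_neg,
    cos_abs, neg_neg, sub_neg_eq_add] at h
  simpa only [pfun, Skern_eq_kernelProfile] using h

lemma pz_eq_mul_integral (hη : Continuous η) (hsupp : HasCompactSupport η) {k : ℂ} {f₁ : ℂ → ℂ}
    (hf₁ : Continuous f₁) (hderiv : ∀ s, HasDerivAt (kernelProfile k) (s * f₁ s) s) (r : E3) :
    pz η k r = r 2 * ∫ q, (η q : ℂ) * f₁ ‖r - emb2 q‖ := by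
  have hemb := continuous_emb2
  have hprofile := (differentiable_kernelProfile k).continuous
  let f' : E3 → E2 → E3 →L[ℝ] ℂ := fun x q =>
    (η q : ℂ) • (innerSL ℝ (x - emb2 q)).smulRight (f₁ ‖x - emb2 q‖)
  have hf' : Continuous f'.uncurry := by
    unfold f' Function.uncurry
    fun_prop
  have hnorm (v : E3) := hasFDerivAt_comp_norm
    (fun s => (hderiv s).comp_ofReal.congr_deriv (Complex.real_smul).symm) v
  have hintegrand (x : E3) (q : E2) :
      HasFDerivAt (fun x => (η q : ℂ) * kernelProfile k ‖x - emb2 q‖) (f' x q) x :=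
    ((hnorm (x - emb2 q)).comp x ((hasFDerivAt_id x).sub_const (emb2 q))).const_mul (η q : ℂ)
  have hη_zero (q : E2) (hq : q ∉ tsupport η) : η q = 0 := image_eq_zero_of_notMem_tsupport hq
  have hpfun : HasFDerivAt (pfun η k) (∫ q, f' r q) r := by
    have h := hasFDerivAt_integral_of_eq_zero_of_notMem (μ := volume) hsupp
      (by unfold Function.uncurry; fun_prop) hf' hintegrand
      (fun x q hq => by simp [hη_zero q hq]) r
    simp only [← Skern_eq_kernelProfile] at h
    exact h
  have hint : Integrable (f' r) := (hf'.uncurry_left r).integrable_of_hasCompactSupport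
    (.intro hsupp fun q hq => by
      ext
      simp [f', hη_zero q hq])
  rw [pz, hpfun.fderiv, ContinuousLinearMap.integral_apply hint, ← integral_const_mul]
  congr 1 with q
  simp only [f', _root_.smul_apply, ContinuousLinearMap.smulRight_apply, innerSL_apply_apply,
    inner_sub_emb2_single, Complex.real_smul, smul_eq_mul]
  ring

lemma pz_eq (hη : ContDiff ℝ ∞ η) (hsupp : HasCompactSupport η) (hR : 0 ≤ R)
    (hzero : ∀ q, R ≤ ‖q - proj32 r‖ → η q = 0) (k : ℂ) :
    pz η k r = -(2 * π * η (proj32 r) * Complex.sin (k * r 2)) -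
      r 2 * ∫ θ in -π..π, ∫ ρ in 0..R,
        (radialDeriv η (r, θ) ρ : ℂ) * kernelProfile k √(r 2 ^ 2 + ρ ^ 2) := by
  obtain ⟨f₁, hf₁, hderiv⟩ :=
    exists_hasDerivAt_mul_of_even (differentiable_kernelProfile k) (kernelProfile_even k)
  rw [pz_eq_mul_integral hη.continuous hsupp hf₁ hderiv r, integral_mul_comp_norm_sub_emb2 hη
    (fun s => (hderiv s).comp_ofReal.congr_deriv (Complex.real_smul).symm)
    (hf₁.comp Complex.continuous_ofReal) hR hzero, ← mul_kernelProfile_abs]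
  ring

end PlaneWave

section Remainder

/-- The distance from `r` to the points of the plane at distance `ρ` from the projection of `r`;
`x = (r, θ)`. -/
def radialPhase (x : E3 × ℝ) (ρ : ℝ) : ℝ := √(x.1 2 ^ 2 + ρ ^ 2)

/-- The coefficient of `exp (σ i k radialPhase)`, `σ = ± 1`, in the remainder
`Φ_k - η(proj32 r) e^{ikz}`. -/
def radialAmplitude (η : E2 → ℝ) (σ : ℝ) (x : E3 × ℝ) (ρ : ℝ) : ℂ :=
  radialDeriv η x ρ * ((1 + σ * (x.1 2 / radialPhase x ρ) : ℝ) / 2)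

lemma radialPhase_pos (x : E3 × ℝ) {ρ : ℝ} (hρ : 0 < ρ) : 0 < radialPhase x ρ :=
  Real.sqrt_pos.mpr (by positivity)

lemma continuous_radialPhase (x : E3 × ℝ) : Continuous (radialPhase x) := by
  unfold radialPhase
  fun_prop

lemma contDiffOn_radialPhase : ContDiffOn ℝ ∞ radialPhase.uncurry {p | 0 < p.2} := by
  have h : ContDiff ℝ ∞ fun p : (E3 × ℝ) × ℝ => p.1.1 2 ^ 2 + p.2 ^ 2 := by fun_prop
  exact h.contDiffOn.sqrt fun p hp => (by have : 0 < p.2 := hp; positivity)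

lemma deriv_radialPhase_ne_zero (x : E3 × ℝ) {ρ : ℝ} (hρ : 0 < ρ) :
    deriv (radialPhase x) ρ ≠ 0 := by
  have hpos : 0 < x.1 2 ^ 2 + ρ ^ 2 := by positivity
  have h := (((hasDerivAt_id ρ).pow 2).const_add (x.1 2 ^ 2)).sqrt hpos.ne'
  have hderiv : deriv (radialPhase x) ρ = _ := h.deriv
  rw [hderiv]
  simp only [id]
  positivity

variable {η : E2 → ℝ}

lemma contDiffOn_radialAmplitude (hη : ContDiff ℝ ∞ η) (σ : ℝ) :
    ContDiffOn ℝ ∞ (radialAmplitude η σ).uncurry {p | 0 < p.2} := by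
  have hz : ContDiffOn ℝ ∞ (fun p : (E3 × ℝ) × ℝ => p.1.1 2) {p | 0 < p.2} :=
    (by fun_prop : ContDiff ℝ ∞ fun p : (E3 × ℝ) × ℝ => p.1.1 2).contDiffOn
  have hweight := contDiffOn_const (c := (1 : ℝ)).add <| contDiffOn_const (c := σ).mul <|
    hz.div contDiffOn_radialPhase fun p hp => (radialPhase_pos p.1 hp).ne'
  exact (Complex.ofRealCLM.contDiff.comp_contDiffOn (contDiff_radialDeriv hη).contDiffOn).mul
    ((Complex.ofRealCLM.contDiff.comp_contDiffOn hweight).mul contDiffOn_const)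

lemma radialDeriv_eventuallyEq_zero {x : E3 × ℝ} {ρ c : ℝ}
    (h : ∀ᶠ t in 𝓝 ρ, η (proj32 x.1 + t • unitVec x.2) = c) :
    radialDeriv η x =ᶠ[𝓝 ρ] 0 :=
  (EventuallyEq.deriv (f := fun _ => c) h).trans (.of_eq (deriv_const' c))

lemma radialAmplitude_eventuallyEq_zero {x : E3 × ℝ} {ρ : ℝ}
    (h : radialDeriv η x =ᶠ[𝓝 ρ] 0) (σ : ℝ) : radialAmplitude η σ x =ᶠ[𝓝 ρ] 0 :=
  h.mono fun t ht => by simp [radialAmplitude, ht]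

lemma cos_add_mul_kernelProfile (k : ℂ) (z : ℝ) {s : ℝ} (hs : s ≠ 0) :
    Complex.cos (k * s) + Complex.I * z * kernelProfile k s =
      ((1 + 1 * (z / s) : ℝ) / 2) * Complex.exp (Complex.I * k * s) +
        ((1 + -1 * (z / s) : ℝ) / 2) * Complex.exp (-(Complex.I * k) * s) := by
  have hs' : (s : ℂ) ≠ 0 := Complex.ofReal_ne_zero.mpr hs
  have hexp : Complex.exp (Complex.I * k * s) =
      Complex.cos (k * s) + Complex.sin (k * s) * Complex.I := by
    rw [← Complex.exp_mul_I]
    ring_nf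
  have hexp_neg : Complex.exp (-(Complex.I * k) * s) =
      Complex.cos (k * s) - Complex.sin (k * s) * Complex.I := by
    rw [Complex.cos_sub_sin_I]
    ring_nf
  rw [kernelProfile_of_ne_zero k hs', hexp, hexp_neg]
  push_cast
  field_simp
  ring

end Remainder

section Conclusion

/-- The contribution of the ray in direction `θ`, up to radius `R`, to
`2π (Φ_k(r) - η(proj32 r) e^{ikz})`; `x = (r, θ)`. -/
def rayRemainder (η : E2 → ℝ) (k : ℂ) (R : ℝ) (x : E3 × ℝ) : ℂ :=
  ∫ ρ in 0..R, (radialDeriv η x ρ : ℂ) * (Complex.cos (k * radialPhase x ρ) +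
    Complex.I * x.1 2 * kernelProfile k (radialPhase x ρ))

variable {η : E2 → ℝ}

lemma continuousOn_radialAmplitude_mul_cexp (hη : ContDiff ℝ ∞ η) (σ : ℝ) (x : E3 × ℝ) (w : ℂ) :
    ContinuousOn (fun ρ => radialAmplitude η σ x ρ * Complex.exp (w * radialPhase x ρ))
      (Ioi 0) := by
  have hamp : ContinuousOn (radialAmplitude η σ x) (Ioi 0) :=
    (contDiffOn_radialAmplitude hη σ).continuousOn.comp (f := fun ρ => (x, ρ))
      (by fun_prop) fun _ hρ => hρ
  have hphase := continuous_radialPhase x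
  exact hamp.mul (Continuous.continuousOn (by fun_prop))

lemma rayRemainder_eq_add (hη : ContDiff ℝ ∞ η) (x : E3 × ℝ) {α β : ℝ} (hα : 0 < α)
    (hβ : 0 < β) (hzero : ∀ ρ ∈ Icc 0 α, radialDeriv η x ρ = 0) (k : ℂ) :
    rayRemainder η k β x =
      (∫ ρ in α..β, radialAmplitude η 1 x ρ * Complex.exp (Complex.I * k * radialPhase x ρ)) +
        ∫ ρ in α..β, radialAmplitude η (-1) x ρ *
          Complex.exp (-(Complex.I * k) * radialPhase x ρ) := by
  have hpos : uIcc α β ⊆ Ioi 0 := fun ρ hρ => (lt_min hα hβ).trans_le hρ.1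
  have hint (σ : ℝ) (w : ℂ) : IntervalIntegrable
      (fun ρ => radialAmplitude η σ x ρ * Complex.exp (w * radialPhase x ρ)) volume α β :=
    ((continuousOn_radialAmplitude_mul_cexp hη σ x w).mono hpos).intervalIntegrable
  have hcont : Continuous fun ρ => (radialDeriv η x ρ : ℂ) * (Complex.cos (k * radialPhase x ρ) +
      Complex.I * x.1 2 * kernelProfile k (radialPhase x ρ)) := by
    have := (contDiff_radialDeriv hη).continuous.uncurry_left x
    have := continuous_radialPhase x
    have := (differentiable_kernelProfile k).continuous
    fun_prop
  have near_zero : ∫ ρ in 0..α, (radialDeriv η x ρ : ℂ) * (Complex.cos (k * radialPhase x ρ) +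
      Complex.I * x.1 2 * kernelProfile k (radialPhase x ρ)) = 0 := by
    rw [intervalIntegral.integral_congr (g := fun _ => 0) fun ρ hρ => by
      simp [hzero ρ (uIcc_of_le hα.le ▸ hρ)], intervalIntegral.integral_zero]
  rw [rayRemainder,
    ← intervalIntegral.integral_add_adjacent_intervals (hcont.intervalIntegrable 0 α)
    (hcont.intervalIntegrable α β), near_zero, zero_add,
    ← intervalIntegral.integral_add (hint _ _) (hint _ _)]
  refine intervalIntegral.integral_congr fun ρ hρ => ?_
  simp only [radialAmplitude, cos_add_mul_kernelProfile k (x.1 2) (radialPhase_pos x (hpos hρ)).ne']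
  ring

lemma Phi_eq_add_integral_rayRemainder (hη : ContDiff ℝ ∞ η) (hsupp : HasCompactSupport η)
    {r : E3} {R : ℝ} (hR : 0 ≤ R) (hzero : ∀ q, R ≤ ‖q - proj32 r‖ → η q = 0) (k : ℂ) :
    Phi η k r = η (proj32 r) * Complex.exp (Complex.I * k * r 2) + 1 / (2 * π) *
      ∫ θ in -π..π, rayRemainder η k R (r, θ) := by
  have hexp : Complex.exp (Complex.I * k * r 2) =
      Complex.cos (k * r 2) + Complex.sin (k * r 2) * Complex.I := by
    rw [← Complex.exp_mul_I]
    ring_nf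
  have hphase := continuous_radialPhase (r, 0)
  have hprofile := (differentiable_kernelProfile k).continuous
  simp only [rayRemainder, radialPhase] at hphase ⊢
  rw [integral_radialDeriv_mul_add hη r R (by fun_prop) (by fun_prop), hexp, Phi,
    pz_eq hη hsupp hR hzero k, div_mul_eq_mul_div, mul_pfun_eq hη hR hzero k]
  simp only [mul_left_comm _ (Complex.I * (r 2 : ℂ)), intervalIntegral.integral_const_mul]
  have : (π : ℂ) ≠ 0 := Complex.ofReal_ne_zero.mpr pi_ne_zero
  field_simp
  ring

lemma exists_norm_pow_mul_norm_integral_radialAmplitude_le (hη : ContDiff ℝ ∞ η) {K : Set E3}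
    (hK : IsCompact K) {α β : ℝ} (hα : 0 < α) (hβ : 0 < β) (c : ℝ) (n : ℕ) (σ : ℝ) :
    ∃ C, ∀ r ∈ K, ∀ θ ∈ Icc (-π) π,
      radialDeriv η (r, θ) =ᶠ[𝓝 α] 0 → radialDeriv η (r, θ) =ᶠ[𝓝 β] 0 →
      ∀ w : ℂ, |w.re| ≤ c → ‖w‖ ^ n * ‖∫ ρ in α..β, radialAmplitude η σ (r, θ) ρ *
        Complex.exp (w * radialPhase (r, θ) ρ)‖ ≤ C := by
  obtain ⟨C, hC⟩ := exists_norm_pow_mul_norm_integral_mul_cexp_le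
    (isOpen_lt continuous_const continuous_snd) contDiffOn_radialPhase
    (fun x _ => deriv_radialPhase_ne_zero x) (hK.prod isCompact_Icc)
    (fun _ hp => (lt_min hα hβ).trans_le hp.2.1) c n (contDiffOn_radialAmplitude hη σ)
  exact ⟨C, fun r hr θ hθ h₁ h₂ => hC (r, θ) ⟨hr, hθ⟩ (radialAmplitude_eventuallyEq_zero h₁ σ)
    (radialAmplitude_eventuallyEq_zero h₂ σ)⟩

lemma radialDeriv_eventuallyEq_zero_of_abs_lt {x : E3 × ℝ} {δ ρ a : ℝ}
    (hconst : ∀ q, ‖q - proj32 x.1‖ ≤ δ → η q = a) (hρ : |ρ| < δ) :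
    radialDeriv η x =ᶠ[𝓝 ρ] 0 :=
  radialDeriv_eventuallyEq_zero <| (continuous_abs.continuousAt.eventually_lt_const hρ).mono
    fun t ht => hconst _ ((norm_add_smul_unitVec_sub _ t _).trans_le ht.le)

lemma radialDeriv_eventuallyEq_zero_of_lt_abs {x : E3 × ℝ} {R ρ a : ℝ}
    (hconst : ∀ q, R ≤ ‖q - proj32 x.1‖ → η q = a) (hρ : R < |ρ|) :
    radialDeriv η x =ᶠ[𝓝 ρ] 0 :=
  radialDeriv_eventuallyEq_zero <| (continuous_abs.continuousAt.eventually_const_lt hρ).mono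
    fun t ht => hconst _ (ht.le.trans_eq (norm_add_smul_unitVec_sub _ t _).symm)

lemma exists_norm_pow_mul_norm_rayRemainder_le (hη : ContDiff ℝ ∞ η) {K : Set E3}
    (hK : IsCompact K) {δ R : ℝ} (hδ : 0 < δ) (hR : 0 < R) (c : ℝ) (n : ℕ) :
    ∃ C, ∀ r ∈ K, (∀ q, ‖q - proj32 r‖ ≤ δ → η q = 1) → (∀ q, R ≤ ‖q - proj32 r‖ → η q = 0) →
      ∀ θ ∈ Icc (-π) π, ∀ k : ℂ, |k.im| ≤ c →
        ‖k‖ ^ n * ‖rayRemainder η k (R + 1) (r, θ)‖ ≤ C := by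
  have hR' : 0 < R + 1 := by positivity
  have hbound := exists_norm_pow_mul_norm_integral_radialAmplitude_le hη hK (half_pos hδ) hR' c n
  obtain ⟨C₁, hC₁⟩ := hbound 1
  obtain ⟨C₂, hC₂⟩ := hbound (-1)
  refine ⟨C₁ + C₂, fun r hr hone hzero θ hθ k hk => ?_⟩
  have inner_zero {ρ : ℝ} (hρ : |ρ| < δ) : radialDeriv η (r, θ) =ᶠ[𝓝 ρ] 0 :=
    radialDeriv_eventuallyEq_zero_of_abs_lt hone hρ
  have lower : radialDeriv η (r, θ) =ᶠ[𝓝 (δ / 2)] 0 :=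
    inner_zero (by rw [abs_of_pos (half_pos hδ)]; exact half_lt_self hδ)
  have upper : radialDeriv η (r, θ) =ᶠ[𝓝 (R + 1)] 0 :=
    radialDeriv_eventuallyEq_zero_of_lt_abs hzero (by rw [abs_of_pos hR']; exact lt_add_one R)
  have b₁ := hC₁ r hr θ hθ lower upper (Complex.I * k) (by simpa using hk)
  have b₂ := hC₂ r hr θ hθ lower upper (-(Complex.I * k)) (by simpa using hk)
  rw [norm_neg] at b₂
  rw [norm_mul, Complex.norm_I, one_mul] at b₁ b₂
  rw [rayRemainder_eq_add hη (r, θ) (half_pos hδ) hR' (fun ρ hρ => (inner_zero (by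
    rw [abs_of_nonneg hρ.1]; linarith [hρ.2])).self_of_nhds) k]
  calc _ ≤ ‖k‖ ^ n * (_ + _) := by gcongr; exact norm_add_le _ _
    _ = _ + _ := mul_add _ _ _
    _ ≤ C₁ + C₂ := add_le_add b₁ b₂

end Conclusion

theorem stmt9_general {η : E2 → ℝ} (hη : ContDiff ℝ ∞ η) (hsupp : HasCompactSupport η)
    {K : Set E3} (hK : Bornology.IsBounded K) {δ : ℝ} (hδ : 0 < δ)
    (hone : ∀ r ∈ K, ∀ q, ‖q - proj32 r‖ ≤ δ → η q = 1) (c : ℝ) (n : ℕ) :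
    ∃ C, ∀ r ∈ K, ∀ k : ℂ, |k.im| ≤ c →
      ‖k‖ ^ n * ‖Phi η k r - Complex.exp (Complex.I * k * r 2)‖ ≤ C := by
  have hK' : IsCompact (closure K) := hK.isCompact_closure
  obtain ⟨R, hR, hzero⟩ := exists_forall_eq_zero_of_le_norm_sub hsupp
    ((hK'.image contDiff_proj32.continuous).isBounded)
  obtain ⟨C, hC⟩ := exists_norm_pow_mul_norm_rayRemainder_le hη hK' hδ hR c n
  refine ⟨C, fun r hr k hk => ?_⟩
  have hzero' := hzero _ (mem_image_of_mem _ (subset_closure hr))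
  have hcenter : η (proj32 r) = 1 := hone r hr _ (by simpa using hδ.le)
  have hPhi : Phi η k r - Complex.exp (Complex.I * k * r 2) =
      1 / (2 * π) * ∫ θ in -π..π, rayRemainder η k (R + 1) (r, θ) := by
    rw [Phi_eq_add_integral_rayRemainder hη hsupp (R := R + 1) (by positivity)
      (fun q hq => hzero' q (by linarith)) k, hcenter, Complex.ofReal_one, one_mul,
      add_sub_cancel_left]
  have hint : ‖∫ θ in -π..π, k ^ n * rayRemainder η k (R + 1) (r, θ)‖ ≤ C * |π - -π| := by
    refine intervalIntegral.norm_integral_le_of_norm_le_const fun θ hθ => ?_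
    rw [uIoc_of_le (by linarith [pi_pos])] at hθ
    rw [norm_mul, norm_pow]
    exact hC r (subset_closure hr) (hone r hr) hzero' θ (Ioc_subset_Icc_self hθ) k hk
  rw [hPhi, ← norm_pow, ← norm_mul, mul_left_comm, ← intervalIntegral.integral_const_mul, norm_mul]
  calc _ ≤ ‖(1 / (2 * π) : ℂ)‖ * (C * |π - -π|) := mul_le_mul_of_nonneg_left hint (norm_nonneg _)
    _ = C := by
      have hnorm : ‖(1 / (2 * π) : ℂ)‖ = 1 / (2 * π) := by simp [abs_of_pos pi_pos]
      rw [hnorm, sub_neg_eq_add, ← two_mul, abs_of_pos two_pi_pos]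
      field_simp

theorem stmt9 (η : E2 → ℝ) (hη : ContDiff ℝ (⊤ : ℕ∞) η) (hsupp : HasCompactSupport η)
    (K : Set E3) (hK : IsCompact K) (δ : ℝ) (hδ : 0 < δ)
    (hone : ∀ r ∈ K, ∀ q : E2, ‖q - proj32 r‖ ≤ 2 * δ → η q = 1) :
    ∀ c₀ > (0:ℝ), ∀ n : ℕ, ∃ C : ℝ, ∀ r ∈ K, ∀ k : ℂ,
      1 ≤ k.re → |k.im| ≤ c₀ →
      ‖Phi η k r - Complex.exp (Complex.I * k * (r 2 : ℂ))‖ ≤ C / k.re ^ n := by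
  intro c₀ _ n
  obtain ⟨C, hC⟩ := stmt9_general hη hsupp hK.isBounded (mul_pos two_pos hδ) hone c₀ n
  refine ⟨C, fun r hr k hk him => (le_div_iff₀' (by positivity)).mpr (le_trans ?_ (hC r hr k him))⟩
  gcongr
  exact Complex.re_le_norm k

end
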